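/- The restriction of the projection π: u ↦ u^η to the center Z(R) of R(f) is an injective algebra homomorphism from Z(R) onto its image W(F,H) inside R(F,H). In particular π(Ω) = 2η(E)F + u(H+1). -/

import Mathlib

/-!
Write `c = η(E)`, let `I = R(f)·ker η` be the left ideal of `SmithEtaIdeal`, and let `W μ` be the
`μ`-eigenspace of `ad H`; thus `E ∈ W 1`, `F ∈ W (-1)` and `p(H) ∈ W 0`.

Every element of `R(f)` is a sum of terms `F^i p(H) E^j`. Since `E^j ≡ c^j` modulo `ker η`, this gives
`R(f) = R(F,H) + I`, so `r - π r ∈ I` for all `r`. Multiplicativity on the center follows from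
`z₁ z₂ - π z₁ π z₂ = z₂ (z₁ - π z₁) + π z₁ (z₂ - π z₂)`, as `I` is a left ideal.

For injectivity, a central `z` lies in `W 0`, and eigenspaces of `ad H` are independent, so
`z = ∑ F^i g_i(H) E^i`. Then `π z = ∑ c^i F^i g_i(H)`, whose terms lie in the distinct eigenspaces
`W (-i)`. If `π z = 0`, every `F^i g_i(H)` vanishes because `c ≠ 0`, hence so does `z`. Only the
spanning half of the Poincaré–Birkhoff–Witt theorem is used.
-/

open Polynomial

inductive SmithGen : Type
  | E | F | H

open SmithGen in
inductive SmithRel (f : ℂ[X]) : FreeAlgebra ℂ SmithGen → FreeAlgebra ℂ SmithGen → Prop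
  | ef : SmithRel f (FreeAlgebra.ι ℂ E * FreeAlgebra.ι ℂ F - FreeAlgebra.ι ℂ F * FreeAlgebra.ι ℂ E)
      (aeval (FreeAlgebra.ι ℂ H) f)
  | he : SmithRel f (FreeAlgebra.ι ℂ H * FreeAlgebra.ι ℂ E - FreeAlgebra.ι ℂ E * FreeAlgebra.ι ℂ H)
      (FreeAlgebra.ι ℂ E)
  | hf : SmithRel f (FreeAlgebra.ι ℂ H * FreeAlgebra.ι ℂ F - FreeAlgebra.ι ℂ F * FreeAlgebra.ι ℂ H)
      (-FreeAlgebra.ι ℂ F)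

/-- Smith's algebra `R(f)`, similar to `U(sl₂)`. -/
abbrev SmithAlgebra (f : ℂ[X]) : Type := RingQuot (SmithRel f)

noncomputable def SmithE (f : ℂ[X]) : SmithAlgebra f :=
  RingQuot.mkAlgHom ℂ (SmithRel f) (FreeAlgebra.ι ℂ SmithGen.E)

noncomputable def SmithF (f : ℂ[X]) : SmithAlgebra f :=
  RingQuot.mkAlgHom ℂ (SmithRel f) (FreeAlgebra.ι ℂ SmithGen.F)

noncomputable def SmithH (f : ℂ[X]) : SmithAlgebra f :=
  RingQuot.mkAlgHom ℂ (SmithRel f) (FreeAlgebra.ι ℂ SmithGen.H)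

/-- The Casimir element `Ω = 2FE + u(H+1)`. -/
noncomputable def SmithOmega (f u : ℂ[X]) : SmithAlgebra f :=
  2 * SmithF f * SmithE f + aeval (SmithH f) (u.comp (X + 1))

/-- The subalgebra `R(E)` of `R(f)` generated by `E`. -/
noncomputable def SmithRE (f : ℂ[X]) : Subalgebra ℂ (SmithAlgebra f) :=
  Algebra.adjoin ℂ {SmithE f}

/-- The subalgebra `R(F,H)` of `R(f)` generated by `F` and `H`. -/
noncomputable def SmithRFH (f : ℂ[X]) : Subalgebra ℂ (SmithAlgebra f) :=
  Algebra.adjoin ℂ {SmithF f, SmithH f}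

/-- `E` as an element of `R(E)`. -/
noncomputable def SmithE' (f : ℂ[X]) : SmithRE f :=
  ⟨SmithE f, Algebra.self_mem_adjoin_singleton ℂ _⟩

/-- The subspace `R(f)·R_η(E)` of `R(f)`, where `R_η(E) = ker η`. -/
noncomputable def SmithEtaIdeal (f : ℂ[X]) (η : SmithRE f →ₐ[ℂ] ℂ) :
    Submodule ℂ (SmithAlgebra f) :=
  Submodule.span ℂ {z | ∃ (r : SmithAlgebra f) (x : SmithRE f), η x = 0 ∧ z = r * (x : SmithAlgebra f)}

/-- The `μ`-eigenspace of `ad H` on `R(f)`. -/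
noncomputable def adHWeight (f : ℂ[X]) (μ : ℂ) : Submodule ℂ (SmithAlgebra f) :=
  Module.End.eigenspace
    (LinearMap.mulLeft ℂ (SmithH f) - LinearMap.mulRight ℂ (SmithH f)) μ

lemma mem_adHWeight {f : ℂ[X]} {μ : ℂ} {x : SmithAlgebra f} :
    x ∈ adHWeight f μ ↔ SmithH f * x - x * SmithH f = μ • x := by
  simp [adHWeight]

lemma adHWeight_iSupIndep (f : ℂ[X]) : iSupIndep (adHWeight f) :=
  Module.End.eigenspaces_iSupIndep _

lemma smith_ef (f : ℂ[X]) :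
    SmithE f * SmithF f - SmithF f * SmithE f = aeval (SmithH f) f := by
  have h := RingQuot.mkAlgHom_rel ℂ (SmithRel.ef (f := f))
  simpa [SmithE, SmithF, SmithH, ← aeval_algHom_apply] using h

lemma smith_he (f : ℂ[X]) :
    SmithH f * SmithE f - SmithE f * SmithH f = SmithE f := by
  have h := RingQuot.mkAlgHom_rel ℂ (SmithRel.he (f := f))
  simpa [SmithE, SmithF, SmithH] using h

lemma smith_hf (f : ℂ[X]) :
    SmithH f * SmithF f - SmithF f * SmithH f = -SmithF f := by
  have h := RingQuot.mkAlgHom_rel ℂ (SmithRel.hf (f := f))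
  simpa [SmithE, SmithF, SmithH] using h

lemma adHWeight_mul {f : ℂ[X]} {μ ν : ℂ} {x y : SmithAlgebra f}
    (hx : x ∈ adHWeight f μ) (hy : y ∈ adHWeight f ν) : x * y ∈ adHWeight f (μ + ν) := by
  rw [mem_adHWeight] at *
  calc SmithH f * (x * y) - x * y * SmithH f
      = (SmithH f * x - x * SmithH f) * y + x * (SmithH f * y - y * SmithH f) := by
        simp only [mul_sub, sub_mul, mul_assoc]
        abel
    _ = (μ + ν) • (x * y) := by rw [hx, hy, smul_mul_assoc, mul_smul_comm, add_smul]

lemma one_mem_adHWeight (f : ℂ[X]) : (1 : SmithAlgebra f) ∈ adHWeight f 0 := by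
  simp [mem_adHWeight]

lemma adHWeight_pow {f : ℂ[X]} {μ : ℂ} {x : SmithAlgebra f}
    (hx : x ∈ adHWeight f μ) (n : ℕ) : x ^ n ∈ adHWeight f (n * μ) := by
  induction n with
  | zero => simpa using one_mem_adHWeight f
  | succ n ih =>
    have h := adHWeight_mul ih hx
    rw [pow_succ]
    convert h using 1
    push_cast
    ring_nf

lemma aeval_mem_adHWeight (f p : ℂ[X]) : aeval (SmithH f) p ∈ adHWeight f 0 := by
  rw [mem_adHWeight, zero_smul, sub_eq_zero]
  have h := congrArg (aeval (SmithH f)) (mul_comm X p)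
  simpa using h

lemma F_pow_aeval_mem_adHWeight (f p : ℂ[X]) (i : ℕ) :
    SmithF f ^ i * aeval (SmithH f) p ∈ adHWeight f (-i) := by
  have hF : SmithF f ∈ adHWeight f (-1) := by
    rw [mem_adHWeight, smith_hf]
    exact (neg_one_smul ℂ (SmithF f)).symm
  simpa using adHWeight_mul (adHWeight_pow hF i) (aeval_mem_adHWeight f p)

lemma F_pow_aeval_E_pow_mem_adHWeight (f p : ℂ[X]) (i j : ℕ) :
    SmithF f ^ i * aeval (SmithH f) p * SmithE f ^ j ∈ adHWeight f (-i + j) := by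
  have hE : SmithE f ∈ adHWeight f 1 := by
    rw [mem_adHWeight, smith_he, one_smul]
  simpa using adHWeight_mul (F_pow_aeval_mem_adHWeight f p i) (adHWeight_pow hE j)

/-- A subspace containing `1` and stable under left multiplication by the three generators is
everything. -/
lemma smith_submodule_eq_top {f : ℂ[X]} (M : Submodule ℂ (SmithAlgebra f)) (h1 : 1 ∈ M)
    (hE : ∀ m ∈ M, SmithE f * m ∈ M) (hF : ∀ m ∈ M, SmithF f * m ∈ M)
    (hH : ∀ m ∈ M, SmithH f * m ∈ M) (r : SmithAlgebra f) : r ∈ M := by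
  obtain ⟨a, rfl⟩ := RingQuot.mkAlgHom_surjective ℂ (SmithRel f) r
  suffices h : ∀ m ∈ M, RingQuot.mkAlgHom ℂ (SmithRel f) a * m ∈ M by
    simpa using h 1 h1
  induction a using FreeAlgebra.induction with
  | grade0 c =>
    intro m hm
    rw [AlgHom.commutes, ← Algebra.smul_def]
    exact M.smul_mem _ hm
  | grade1 x =>
    cases x
    · exact hE
    · exact hF
    · exact hH
  | mul a b ha hb =>
    intro m hm
    rw [map_mul, mul_assoc]
    exact ha _ (hb _ hm)
  | add a b ha hb =>
    intro m hm
    rw [map_add, add_mul]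
    exact M.add_mem (ha _ hm) (hb _ hm)

lemma F_mem_RFH (f : ℂ[X]) : SmithF f ∈ SmithRFH f :=
  Algebra.subset_adjoin (by simp)

lemma H_mem_RFH (f : ℂ[X]) : SmithH f ∈ SmithRFH f :=
  Algebra.subset_adjoin (by simp)

lemma aeval_mem_RFH (f p : ℂ[X]) : aeval (SmithH f) p ∈ SmithRFH f :=
  (Algebra.adjoin_mono (by simp)) (aeval_mem_adjoin_singleton ℂ (SmithH f) (p := p))

/-- `R(F,H)` is spanned by the ordered products `F^i p(H)`. -/
lemma RFH_le_span (f : ℂ[X]) {a : SmithAlgebra f} (ha : a ∈ SmithRFH f) :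
    a ∈ Submodule.span ℂ
      {z | ∃ (i : ℕ) (p : ℂ[X]), z = SmithF f ^ i * aeval (SmithH f) p} := by
  set M := Submodule.span ℂ
      {z | ∃ (i : ℕ) (p : ℂ[X]), z = SmithF f ^ i * aeval (SmithH f) p} with hM
  have h1 : (1 : SmithAlgebra f) ∈ M := Submodule.subset_span ⟨0, 1, by simp⟩
  suffices h : ∀ m ∈ M, a * m ∈ M by simpa using h 1 h1
  induction ha using Algebra.adjoin_induction with
  | mem x hx =>
    intro m hm
    induction hm using Submodule.span_induction with
    | zero => simp
    | add y z _ _ hy hz => rw [mul_add]; exact M.add_mem hy hz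
    | smul c y _ hy => rw [mul_smul_comm]; exact M.smul_mem _ hy
    | mem y hy =>
      obtain ⟨i, p, rfl⟩ := hy
      rcases hx with rfl | rfl
      · exact Submodule.subset_span ⟨i + 1, p, by rw [pow_succ', mul_assoc]⟩
      · have h := mem_adHWeight.1 (F_pow_aeval_mem_adHWeight f p i)
        rw [sub_eq_iff_eq_add] at h
        rw [h]
        refine M.add_mem (M.smul_mem _ (Submodule.subset_span ⟨i, p, rfl⟩))
          (Submodule.subset_span ⟨i, p * X, by simp [mul_assoc]⟩)
  | algebraMap c =>
    intro m hm
    rw [← Algebra.smul_def]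
    exact M.smul_mem _ hm
  | mul a b _ _ ha hb =>
    intro m hm
    rw [mul_assoc]
    exact ha _ (hb _ hm)
  | add a b _ _ ha hb =>
    intro m hm
    rw [add_mul]
    exact M.add_mem (ha _ hm) (hb _ hm)

/-- `E·R(F,H) ⊆ R(F,H)·E + R(F,H)`: the commutation relations move `E` to the right. -/
lemma E_mul_RFH (f : ℂ[X]) {a : SmithAlgebra f} (ha : a ∈ SmithRFH f) :
    ∃ b ∈ SmithRFH f, ∃ d ∈ SmithRFH f, SmithE f * a = b * SmithE f + d := by
  induction ha using Algebra.adjoin_induction with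
  | mem x hx =>
    rcases hx with rfl | rfl
    · refine ⟨_, F_mem_RFH f, _, aeval_mem_RFH f f, ?_⟩
      rw [← smith_ef]
      abel
    · refine ⟨SmithH f - 1, sub_mem (H_mem_RFH f) (one_mem _), 0, zero_mem _, ?_⟩
      have h := smith_he f
      rw [sub_eq_iff_eq_add] at h
      rw [sub_mul, h]
      simp
  | algebraMap c =>
    exact ⟨_, (SmithRFH f).algebraMap_mem c, 0, zero_mem _, by
      rw [add_zero, Algebra.commutes]⟩
  | mul x y _ hy' hx hy =>
    obtain ⟨b, hb, d, hd, h⟩ := hx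
    obtain ⟨b', hb', d', hd', h'⟩ := hy
    refine ⟨b * b', mul_mem hb hb', b * d' + d * y, add_mem (mul_mem hb hd') (mul_mem hd hy'), ?_⟩
    rw [← mul_assoc, h, add_mul, mul_assoc b, h', mul_add, mul_assoc, add_assoc]
  | add x y _ _ hx hy =>
    obtain ⟨b, hb, d, hd, h⟩ := hx
    obtain ⟨b', hb', d', hd', h'⟩ := hy
    refine ⟨b + b', add_mem hb hb', d + d', add_mem hd hd', ?_⟩
    rw [mul_add, h, h', add_mul]
    abel

/-- The spanning half of the Poincaré–Birkhoff–Witt theorem for `R(f)`. -/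
lemma smith_pbw_span (f : ℂ[X]) (r : SmithAlgebra f) :
    r ∈ Submodule.span ℂ {z | ∃ (i j : ℕ) (p : ℂ[X]),
      z = SmithF f ^ i * aeval (SmithH f) p * SmithE f ^ j} := by
  set M := Submodule.span ℂ {z | ∃ (i j : ℕ) (p : ℂ[X]),
      z = SmithF f ^ i * aeval (SmithH f) p * SmithE f ^ j} with hM
  have key : ∀ a ∈ SmithRFH f, ∀ j : ℕ, a * SmithE f ^ j ∈ M := by
    intro a ha j
    have h := RFH_le_span f ha
    clear ha
    induction h using Submodule.span_induction with
    | zero => simp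
    | add y z _ _ hy hz => rw [add_mul]; exact M.add_mem hy hz
    | smul c y _ hy => rw [smul_mul_assoc]; exact M.smul_mem _ hy
    | mem y hy =>
      obtain ⟨i, p, rfl⟩ := hy
      exact Submodule.subset_span ⟨i, j, p, rfl⟩
  have stable : ∀ x : SmithAlgebra f,
      (∀ a ∈ SmithRFH f, ∀ j : ℕ, x * (a * SmithE f ^ j) ∈ M) → ∀ m ∈ M, x * m ∈ M := by
    intro x hx m hm
    induction hm using Submodule.span_induction with
    | zero => simp
    | add y z _ _ hy hz => rw [mul_add]; exact M.add_mem hy hz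
    | smul c y _ hy => rw [mul_smul_comm]; exact M.smul_mem _ hy
    | mem y hy =>
      obtain ⟨i, j, p, rfl⟩ := hy
      exact hx _ (mul_mem (pow_mem (F_mem_RFH f) i) (aeval_mem_RFH f p)) j
  refine smith_submodule_eq_top M ?_ (stable _ ?_) (stable _ ?_) (stable _ ?_) r
  · simpa using key 1 (one_mem _) 0
  · intro a ha j
    obtain ⟨b, hb, d, hd, h⟩ := E_mul_RFH f ha
    rw [← mul_assoc, h, add_mul, mul_assoc, ← pow_succ']
    exact M.add_mem (key _ hb _) (key _ hd _)
  · intro a ha j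
    rw [← mul_assoc]
    exact key _ (mul_mem (F_mem_RFH f) ha) j
  · intro a ha j
    rw [← mul_assoc]
    exact key _ (mul_mem (H_mem_RFH f) ha) j

/-- The elements of `ad H`-weight zero are the sums of the balanced monomials `F^i g_i(H) E^i`. -/
lemma weight_zero_form (f : ℂ[X]) {z : SmithAlgebra f} (hz : z ∈ adHWeight f 0) :
    ∃ g : ℕ →₀ ℂ[X],
      z = g.sum fun i p => SmithF f ^ i * aeval (SmithH f) p * SmithE f ^ i := by
  -- Modulo the nonzero weight spaces, every element has the stated form.
  have key : ∃ g : ℕ →₀ ℂ[X], ∃ k ∈ ⨆ μ, ⨆ _ : μ ≠ 0, adHWeight f μ,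
      z = (g.sum fun i p => SmithF f ^ i * aeval (SmithH f) p * SmithE f ^ i) + k := by
    have h := smith_pbw_span f z
    clear hz
    induction h using Submodule.span_induction with
    | zero => exact ⟨0, 0, zero_mem _, by simp⟩
    | add y z _ _ hy hz =>
      obtain ⟨g, k, hk, rfl⟩ := hy
      obtain ⟨g', k', hk', rfl⟩ := hz
      refine ⟨g + g', k + k', add_mem hk hk', ?_⟩
      rw [Finsupp.sum_add_index' (by simp) (by intros; simp [mul_add, add_mul])]
      abel
    | smul c y _ hy =>
      obtain ⟨g, k, hk, rfl⟩ := hy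
      refine ⟨c • g, c • k, Submodule.smul_mem _ c hk, ?_⟩
      rw [Finsupp.sum_smul_index' (by simp), smul_add, Finsupp.smul_sum]
      simp
    | mem y hy =>
      obtain ⟨i, j, p, rfl⟩ := hy
      by_cases hij : i = j
      · subst hij
        exact ⟨Finsupp.single i p, 0, zero_mem _, by simp⟩
      · refine ⟨0, _, ?_, by rw [Finsupp.sum_zero_index, zero_add]⟩
        have hne : (-i + j : ℂ) ≠ 0 := by
          intro h
          apply hij
          have h' : (i : ℂ) = j := by linear_combination -h
          exact_mod_cast h'
        exact Submodule.mem_iSup_of_mem _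
          (Submodule.mem_iSup_of_mem hne (F_pow_aeval_E_pow_mem_adHWeight f p i j))
  obtain ⟨g, k, hk, hzk⟩ := key
  refine ⟨g, ?_⟩
  have hg : (g.sum fun i p => SmithF f ^ i * aeval (SmithH f) p * SmithE f ^ i) ∈
      adHWeight f 0 := by
    refine Submodule.sum_mem _ fun i _ => ?_
    simpa using F_pow_aeval_E_pow_mem_adHWeight f (g i) i i
  have hk0 : k ∈ adHWeight f 0 := by
    rw [← add_sub_cancel_left (g.sum _) k, ← hzk]
    exact sub_mem hz hg
  have hk' := Submodule.disjoint_def.1 (adHWeight_iSupIndep f 0) k hk0 hk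
  rw [hzk, hk', add_zero]

lemma etaIdeal_mul_left {f : ℂ[X]} {η : SmithRE f →ₐ[ℂ] ℂ} (r : SmithAlgebra f)
    {k : SmithAlgebra f} (hk : k ∈ SmithEtaIdeal f η) : r * k ∈ SmithEtaIdeal f η := by
  induction hk using Submodule.span_induction with
  | zero => simp
  | add y z _ _ hy hz => rw [mul_add]; exact add_mem hy hz
  | smul c y _ hy => rw [mul_smul_comm]; exact Submodule.smul_mem _ _ hy
  | mem y hy =>
    obtain ⟨s, x, hx, rfl⟩ := hy
    exact Submodule.subset_span ⟨r * s, x, hx, by rw [mul_assoc]⟩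

/-- Modulo `R(f)·ker η`, a right factor `E^j` may be replaced by the scalar `η(E)^j`. -/
lemma mul_E_pow_sub_mem {f : ℂ[X]} (η : SmithRE f →ₐ[ℂ] ℂ) (r : SmithAlgebra f) (j : ℕ) :
    r * SmithE f ^ j - η (SmithE' f) ^ j • r ∈ SmithEtaIdeal f η := by
  refine Submodule.subset_span
    ⟨r, SmithE' f ^ j + algebraMap ℂ _ (-(η (SmithE' f) ^ j)), ?_, ?_⟩
  · rw [map_add, map_pow, AlgHom.commutes]
    exact add_neg_cancel _
  · have h : ((SmithE' f ^ j + algebraMap ℂ (SmithRE f) (-(η (SmithE' f) ^ j)) : SmithRE f) :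
        SmithAlgebra f) = SmithE f ^ j + algebraMap ℂ _ (-(η (SmithE' f) ^ j)) := rfl
    rw [h, map_neg, ← sub_eq_add_neg, mul_sub, ← Algebra.commutes, ← Algebra.smul_def]

/-- `R(f) = R(F,H) + R(f)·ker η`. -/
lemma exists_RFH_sub_mem {f : ℂ[X]} (η : SmithRE f →ₐ[ℂ] ℂ) (r : SmithAlgebra f) :
    ∃ a ∈ SmithRFH f, r - a ∈ SmithEtaIdeal f η := by
  have h := smith_pbw_span f r
  induction h using Submodule.span_induction with
  | zero => exact ⟨0, zero_mem _, by simp⟩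
  | add y z _ _ hy hz =>
    obtain ⟨a, ha, h⟩ := hy
    obtain ⟨b, hb, h'⟩ := hz
    exact ⟨a + b, add_mem ha hb, by rw [add_sub_add_comm]; exact add_mem h h'⟩
  | smul c y _ hy =>
    obtain ⟨a, ha, h⟩ := hy
    exact ⟨c • a, (SmithRFH f).smul_mem ha c, by
      rw [← smul_sub]; exact Submodule.smul_mem _ _ h⟩
  | mem y hy =>
    obtain ⟨i, j, p, rfl⟩ := hy
    exact ⟨_, (SmithRFH f).smul_mem
      (mul_mem (pow_mem (F_mem_RFH f) i) (aeval_mem_RFH f p)) _, mul_E_pow_sub_mem η _ j⟩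

/-- The products `F^i g_i(H)` have distinct `ad H`-weights, so a vanishing sum vanishes termwise. -/
lemma F_pow_aeval_eq_zero (f : ℂ[X]) (s : Finset ℕ) (g : ℕ → ℂ[X])
    (h : ∑ i ∈ s, SmithF f ^ i * aeval (SmithH f) (g i) = 0) :
    ∀ i ∈ s, SmithF f ^ i * aeval (SmithH f) (g i) = 0 := by
  intro i hi
  rw [← Finset.add_sum_erase s _ hi] at h
  have hmem := F_pow_aeval_mem_adHWeight f (g i) i
  refine Submodule.disjoint_def.1 (adHWeight_iSupIndep f (-i)) _ hmem ?_
  rw [eq_neg_of_add_eq_zero_left h]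
  refine neg_mem (Submodule.sum_mem _ fun j hj => ?_)
  have hne : (-j : ℂ) ≠ -i := by
    intro h'
    exact Finset.ne_of_mem_erase hj (by exact_mod_cast neg_injective h')
  exact Submodule.mem_iSup_of_mem _
    (Submodule.mem_iSup_of_mem hne (F_pow_aeval_mem_adHWeight f (g j) j))

/-- Let `π : R(f) → R(F,H)` be the projection along `R(f)·R_η(E)`.  On the center `Z(R)`,
`π` is multiplicative and injective, hence an algebra isomorphism of `Z(R)` onto its image
`W(F,H) ⊆ R(F,H)`; moreover `π(Ω) = 2η(E)F + u(H+1)`. -/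
theorem smith_whittaker_model_center (f u : ℂ[X])
    (hu : f = C (1/2 : ℂ) * (u.comp (X + 1) - u))
    (η : SmithRE f →ₐ[ℂ] ℂ) (hη : η (SmithE' f) ≠ 0)
    (π : SmithAlgebra f →ₗ[ℂ] SmithAlgebra f)
    (hrange : ∀ r : SmithAlgebra f, π r ∈ SmithRFH f)
    (hid : ∀ a ∈ SmithRFH f, π a = a)
    (hker : ∀ k ∈ SmithEtaIdeal f η, π k = 0) :
    (∀ z₁ ∈ Subalgebra.center ℂ (SmithAlgebra f), ∀ z₂ ∈ Subalgebra.center ℂ (SmithAlgebra f),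
        π (z₁ * z₂) = π z₁ * π z₂) ∧
    Set.InjOn π (Subalgebra.center ℂ (SmithAlgebra f)) ∧
    π (SmithOmega f u) =
      algebraMap ℂ (SmithAlgebra f) (2 * η (SmithE' f)) * SmithF f +
        aeval (SmithH f) (u.comp (X + 1)) := by
  have hpi : ∀ r a, a ∈ SmithRFH f → r - a ∈ SmithEtaIdeal f η → π r = a := by
    intro r a ha h
    have h0 := hker _ h
    rw [map_sub, hid a ha, sub_eq_zero] at h0
    exact h0
  have hsub : ∀ r, r - π r ∈ SmithEtaIdeal f η := by
    intro r
    obtain ⟨a, ha, h⟩ := exists_RFH_sub_mem η r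
    rwa [hpi r a ha h]
  refine ⟨?_, ?_, ?_⟩
  · intro z₁ hz₁ z₂ hz₂
    refine hpi _ _ (mul_mem (hrange _) (hrange _)) ?_
    have e : z₁ * z₂ - π z₁ * π z₂ = z₂ * (z₁ - π z₁) + π z₁ * (z₂ - π z₂) := by
      have h1 := Subalgebra.mem_center_iff.1 hz₂ z₁
      have h2 := Subalgebra.mem_center_iff.1 hz₂ (π z₁)
      rw [mul_sub, mul_sub, h1, h2]
      abel
    rw [e]
    exact add_mem (etaIdeal_mul_left _ (hsub _)) (etaIdeal_mul_left _ (hsub _))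
  · intro z₁ hz₁ z₂ hz₂ h12
    rw [← sub_eq_zero]
    have hz : z₁ - z₂ ∈ Subalgebra.center ℂ (SmithAlgebra f) := sub_mem hz₁ hz₂
    have hπ : π (z₁ - z₂) = 0 := by rw [map_sub, h12, sub_self]
    generalize z₁ - z₂ = z at hz hπ
    have hw : z ∈ adHWeight f 0 := by
      rw [mem_adHWeight, Subalgebra.mem_center_iff.1 hz, sub_self, zero_smul]
    obtain ⟨g, rfl⟩ := weight_zero_form f hw
    have hterm : ∀ i, π (SmithF f ^ i * aeval (SmithH f) (g i) * SmithE f ^ i) =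
        SmithF f ^ i * aeval (SmithH f) (η (SmithE' f) ^ i • g i) := by
      intro i
      refine hpi _ _ (mul_mem (pow_mem (F_mem_RFH f) i) (aeval_mem_RFH f _)) ?_
      rw [map_smul, mul_smul_comm]
      exact mul_E_pow_sub_mem η _ i
    rw [Finsupp.sum, map_sum, Finset.sum_congr rfl fun i _ => hterm i] at hπ
    refine Finset.sum_eq_zero fun i hi => ?_
    have h := F_pow_aeval_eq_zero f g.support _ hπ i hi
    rw [map_smul, mul_smul_comm] at h
    have h' := (smul_eq_zero.1 h).resolve_left (pow_ne_zero i hη)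
    simp only [h', zero_mul]
  · rw [SmithOmega]
    have hE := mul_E_pow_sub_mem η (2 * SmithF f) 1
    have e : algebraMap ℂ (SmithAlgebra f) (2 * η (SmithE' f)) * SmithF f =
        η (SmithE' f) ^ 1 • (2 * SmithF f) := by
      rw [← Algebra.smul_def, pow_one, mul_comm, mul_smul, two_smul ℂ, two_mul]
    refine hpi _ _ (add_mem (mul_mem ((SmithRFH f).algebraMap_mem _) (F_mem_RFH f))
      (aeval_mem_RFH f _)) ?_
    rw [add_sub_add_right_eq_sub, e]
    simpa only [pow_one] using hE
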